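/- arXiv:2003.01695 — 6 statements merged into one kernel-verified Lean document; each statement's English description precedes it below -/
import Mathlib

section
/- Let x₁, x₂ be real numbers, let ρ be the 2×2 complex matrix with entries ρ₀₀ = cos²(πx₁), ρ₀₁ = e^{−2πi x₂} cos(πx₁) sin(πx₁), ρ₁₀ = e^{2πi x₂} cos(πx₁) sin(πx₁), ρ₁₁ = sin²(πx₁) (the dense angle encoding of (x₁,x₂)), and let U be a 2×2 unitary matrix whose entries U₀₀ = a and U₀₁ = b are real. Then Tr[Π₀ U ρ U†] = a² cos²(πx₁) + a b sin(2πx₁) cos(2πx₂) + b² sin²(πx₁). In particular, the decision boundary of a single-qubit classifier with the dense angle encoding is defined by a² cos²(πx₁) + a b sin(2πx₁) cos(2πx₂) + b² sin²(πx₁) = 1/2. -/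
/-!
The encoding is the pure state `ρ = |x⟩⟨x|`, so `Tr[Π₀ U ρ U†] = |⟨0|U|x⟩|²` (Born's rule), which
involves only the first row `(a, b)` of `U`:
`⟨0|U|x⟩ = a cos(πx₁) + b sin(πx₁) e^{2πi x₂}`. This is a sum of two plane vectors of signed lengths
`a cos(πx₁)` and `b sin(πx₁)` at angle `2πx₂`, and the law of cosines gives its squared length.
-/

open Matrix Complex

noncomputable def Proj0 : Matrix (Fin 2) (Fin 2) ℂ := !![1, 0; 0, 0]

/-- The dense angle encoding of `(x₁, x₂) ∈ ℝ²` as a 2×2 density matrix: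
`ρ = |x⟩⟨x|` with `|x⟩ = cos(πx₁)|0⟩ + e^{2πi x₂} sin(πx₁)|1⟩`. -/
noncomputable def daeEnc (x₁ x₂ : ℝ) : Matrix (Fin 2) (Fin 2) ℂ :=
  !![((Real.cos (Real.pi * x₁) : ℝ) : ℂ) ^ 2,
     Complex.exp (-((2 * Real.pi * x₂ : ℝ) : ℂ) * Complex.I) *
       ((Real.cos (Real.pi * x₁) : ℝ) : ℂ) * ((Real.sin (Real.pi * x₁) : ℝ) : ℂ);
     Complex.exp (((2 * Real.pi * x₂ : ℝ) : ℂ) * Complex.I) *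
       ((Real.cos (Real.pi * x₁) : ℝ) : ℂ) * ((Real.sin (Real.pi * x₁) : ℝ) : ℂ),
     ((Real.sin (Real.pi * x₁) : ℝ) : ℂ) ^ 2]

theorem trace_single_mul_mul_vecMulVec_star_mul_conjTranspose {m n 𝕜 : Type*} [Fintype m]
    [DecidableEq m] [Fintype n] [RCLike 𝕜] (i : m) (U : Matrix m n 𝕜) (ψ : n → 𝕜) :
    (single i i (1 : 𝕜) * U * vecMulVec ψ (star ψ) * Uᴴ).trace = (‖(U *ᵥ ψ) i‖ : 𝕜) ^ 2 := by
  have conj_pure : U * vecMulVec ψ (star ψ) * Uᴴ = vecMulVec (U *ᵥ ψ) (star (U *ᵥ ψ)) := by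
    rw [mul_vecMulVec, vecMulVec_mul, star_mulVec]
  calc (single i i (1 : 𝕜) * U * vecMulVec ψ (star ψ) * Uᴴ).trace
      = (single i i (1 : 𝕜) * vecMulVec (U *ᵥ ψ) (star (U *ᵥ ψ))).trace := by
        rw [← conj_pure, Matrix.mul_assoc, Matrix.mul_assoc, Matrix.mul_assoc]
    _ = (U *ᵥ ψ) i * star ((U *ᵥ ψ) i) := by
        rw [trace_single_mul, one_smul, vecMulVec_apply, Pi.star_apply]
    _ = (‖(U *ᵥ ψ) i‖ : 𝕜) ^ 2 := RCLike.mul_conj _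

theorem norm_ofReal_add_ofReal_mul_exp_mul_I_sq (p q θ : ℝ) :
    ‖(p + q * exp (θ * I) : ℂ)‖ ^ 2 = p ^ 2 + 2 * p * q * Real.cos θ + q ^ 2 := by
  have re_eq : (p + q * exp (θ * I) : ℂ).re = p + q * Real.cos θ := by
    rw [add_re, re_ofReal_mul, ofReal_re, exp_ofReal_mul_I_re]
  have im_eq : (p + q * exp (θ * I) : ℂ).im = q * Real.sin θ := by
    rw [add_im, im_ofReal_mul, ofReal_im, exp_ofReal_mul_I_im, zero_add]
  rw [← normSq_eq_norm_sq, normSq_apply, re_eq, im_eq]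
  linear_combination q ^ 2 * Real.sin_sq_add_cos_sq θ

theorem Proj0_eq_single : Proj0 = single 0 0 1 := by
  ext i j
  fin_cases i <;> fin_cases j <;> simp [Proj0]

/-- The state vector `|x⟩ = cos(πx₁)|0⟩ + e^{2πi x₂} sin(πx₁)|1⟩` of the dense angle encoding, in
coordinates with respect to the basis `|0⟩, |1⟩`; `daeEnc x₁ x₂` is its projector `|x⟩⟨x|`. -/
noncomputable def daeKet (x₁ x₂ : ℝ) : Fin 2 → ℂ :=
  ![Real.cos (Real.pi * x₁), Real.sin (Real.pi * x₁) * exp ((2 * Real.pi * x₂ : ℝ) * I)]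

theorem daeEnc_eq_vecMulVec (x₁ x₂ : ℝ) :
    daeEnc x₁ x₂ = vecMulVec (daeKet x₁ x₂) (star (daeKet x₁ x₂)) := by
  have star_phase (θ : ℝ) : star (exp (θ * I)) = exp (-θ * I) := by
    rw [star_def, ← exp_conj, map_mul, conj_ofReal, conj_I, mul_neg, neg_mul]
  have phase_mul_star (θ : ℝ) : exp (θ * I) * exp (-θ * I) = 1 := by
    rw [← exp_add, neg_mul, add_neg_cancel, exp_zero]
  have star_real (r : ℝ) : star (r : ℂ) = r := conj_ofReal r
  ext i j
  fin_cases i <;> fin_cases j <;>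
    simp only [daeEnc, daeKet, vecMulVec_apply, Pi.star_apply, Fin.zero_eta, Fin.mk_one, of_apply,
      cons_val', cons_val_zero, cons_val_one, cons_val_fin_one, star_mul', star_phase, star_real]
  · ring
  · ring
  · ring
  · linear_combination -((Real.sin (Real.pi * x₁) : ℂ) ^ 2) * phase_mul_star (2 * Real.pi * x₂)

theorem trace_Proj0_mul_mul_daeEnc_mul_conjTranspose (x₁ x₂ : ℝ) (U : Matrix (Fin 2) (Fin 2) ℂ) :
    (Proj0 * U * daeEnc x₁ x₂ * Uᴴ).trace = ((‖(U *ᵥ daeKet x₁ x₂) 0‖ ^ 2 : ℝ) : ℂ) := by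
  rw [Proj0_eq_single, daeEnc_eq_vecMulVec, ofReal_pow]
  exact trace_single_mul_mul_vecMulVec_star_mul_conjTranspose 0 U (daeKet x₁ x₂)

theorem norm_mulVec_daeKet_apply_sq {m : Type*} (x₁ x₂ a b : ℝ) (U : Matrix m (Fin 2) ℂ) (i : m)
    (ha : U i 0 = (a : ℂ)) (hb : U i 1 = (b : ℂ)) :
    ‖(U *ᵥ daeKet x₁ x₂) i‖ ^ 2
      = a ^ 2 * Real.cos (Real.pi * x₁) ^ 2
        + a * b * Real.sin (2 * Real.pi * x₁) * Real.cos (2 * Real.pi * x₂)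
        + b ^ 2 * Real.sin (Real.pi * x₁) ^ 2 := by
  have amplitude : (U *ᵥ daeKet x₁ x₂) i
      = (a * Real.cos (Real.pi * x₁) : ℝ)
        + (b * Real.sin (Real.pi * x₁) : ℝ) * exp ((2 * Real.pi * x₂ : ℝ) * I) := by
    simp only [mulVec, dotProduct, Fin.sum_univ_two, daeKet, cons_val_zero, cons_val_one,
      cons_val_fin_one, ha, hb, ofReal_mul, mul_assoc]
  rw [amplitude, norm_ofReal_add_ofReal_mul_exp_mul_I_sq, mul_assoc 2 Real.pi x₁, Real.sin_two_mul]
  ring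

theorem dae_encoding_decision_boundary_general
    (x₁ x₂ a b : ℝ)
    (U : Matrix (Fin 2) (Fin 2) ℂ)
    (ha : U 0 0 = (a : ℂ)) (hb : U 0 1 = (b : ℂ)) :
    (Proj0 * U * daeEnc x₁ x₂ * Uᴴ).trace
      = ((a ^ 2 * Real.cos (Real.pi * x₁) ^ 2
          + a * b * Real.sin (2 * Real.pi * x₁) * Real.cos (2 * Real.pi * x₂)
          + b ^ 2 * Real.sin (Real.pi * x₁) ^ 2 : ℝ) : ℂ)
    ∧ ((Proj0 * U * daeEnc x₁ x₂ * Uᴴ).trace = 1 / 2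
        ↔ a ^ 2 * Real.cos (Real.pi * x₁) ^ 2
          + a * b * Real.sin (2 * Real.pi * x₁) * Real.cos (2 * Real.pi * x₂)
          + b ^ 2 * Real.sin (Real.pi * x₁) ^ 2 = 1 / 2) := by
  have half_eq : (1 / 2 : ℂ) = ((1 / 2 : ℝ) : ℂ) := by norm_num
  rw [trace_Proj0_mul_mul_daeEnc_mul_conjTranspose,
    norm_mulVec_daeKet_apply_sq x₁ x₂ a b U 0 ha hb, half_eq]
  exact ⟨rfl, ofReal_inj⟩

/-- For `(x₁,x₂) ∈ ℝ²` encoded via the dense angle encoding and a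
2×2 unitary `U` with real entries `U₀₀ = a`, `U₀₁ = b`, we have
`Tr[Π₀ U ρ U†] = a² cos²(πx₁) + a b sin(2πx₁) cos(2πx₂) + b² sin²(πx₁)`;
in particular the decision boundary is
`a² cos²(πx₁) + a b sin(2πx₁) cos(2πx₂) + b² sin²(πx₁) = 1/2`. -/
theorem dae_encoding_decision_boundary
    (x₁ x₂ a b : ℝ)
    (U : Matrix (Fin 2) (Fin 2) ℂ) (hU : U ∈ Matrix.unitaryGroup (Fin 2) ℂ)
    (ha : U 0 0 = (a : ℂ)) (hb : U 0 1 = (b : ℂ)) :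
    (Proj0 * U * daeEnc x₁ x₂ * Uᴴ).trace
      = ((a ^ 2 * Real.cos (Real.pi * x₁) ^ 2
          + a * b * Real.sin (2 * Real.pi * x₁) * Real.cos (2 * Real.pi * x₂)
          + b ^ 2 * Real.sin (Real.pi * x₁) ^ 2 : ℝ) : ℂ)
    ∧ ((Proj0 * U * daeEnc x₁ x₂ * Uᴴ).trace = 1 / 2
        ↔ a ^ 2 * Real.cos (Real.pi * x₁) ^ 2
          + a * b * Real.sin (2 * Real.pi * x₁) * Real.cos (2 * Real.pi * x₂)
          + b ^ 2 * Real.sin (Real.pi * x₁) ^ 2 = 1 / 2) :=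
  dae_encoding_decision_boundary_general x₁ x₂ a b U ha hb
end

section
/- Let ρ be a single-qubit state, let p_I, p_X, p_Y, p_Z be nonnegative reals with p_I + p_X + p_Y + p_Z = 1, and let E_p(ρ) = p_I ρ + p_X XρX + p_Y YρY + p_Z ZρZ be the Pauli channel. If p_X + p_Y ≤ 1/2, then Tr[Π₀ ρ] ≥ 1/2 implies Tr[Π₀ E_p(ρ)] ≥ 1/2; if moreover p_X + p_Y < 1/2, then also Tr[Π₀ ρ] < 1/2 implies Tr[Π₀ E_p(ρ)] < 1/2. Consequently, when p_X + p_Y < 1/2, the predicted label ŷ is the same for E_p(ρ) and ρ, i.e., every state is a robust point of the Pauli channel. -/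
/-! The channel is its own adjoint for the trace pairing, so `Tr[Π₀ E_p(ρ)] = Tr[E_p(Π₀) ρ]`.
Conjugation by `X` or `Y` exchanges `Π₀` and `1 - Π₀`, while conjugation by `Z` fixes `Π₀`. With
`t = Tr[Π₀ ρ]` and `q = p_X + p_Y` this gives `Tr[Π₀ E_p(ρ)] = (1 - q) t + q (1 - t)`, that is,
`Tr[Π₀ E_p(ρ)] - 1/2 = (1 - 2 q) (t - 1/2)`: the bias is multiplied by a factor that is
positive while `q < 1/2`. -/

open Matrix Complex
open scoped ComplexOrder

noncomputable def pauliX : Matrix (Fin 2) (Fin 2) ℂ := !![0, 1; 1, 0]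
noncomputable def pauliY : Matrix (Fin 2) (Fin 2) ℂ := !![0, -Complex.I; Complex.I, 0]
noncomputable def pauliZ : Matrix (Fin 2) (Fin 2) ℂ := !![1, 0; 0, -1]

/-- The Pauli channel `E_p(ρ) = p_I ρ + p_X XρX + p_Y YρY + p_Z ZρZ`. -/
noncomputable def pauliChannel (pI pX pY pZ : ℝ) (ρ : Matrix (Fin 2) (Fin 2) ℂ) :
    Matrix (Fin 2) (Fin 2) ℂ :=
  (pI : ℂ) • ρ + (pX : ℂ) • (pauliX * ρ * pauliX)
    + (pY : ℂ) • (pauliY * ρ * pauliY) + (pZ : ℂ) • (pauliZ * ρ * pauliZ)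

/-- The decision rule: label `0` iff `Tr[Π₀ ρ] ≥ 1/2`, else label `1`. -/
noncomputable def yhat (ρ : Matrix (Fin 2) (Fin 2) ℂ) : ℕ :=
  if 1 / 2 ≤ ((Proj0 * ρ).trace).re then 0 else 1

lemma trace_mul_pauliChannel (pI pX pY pZ : ℝ) (A B : Matrix (Fin 2) (Fin 2) ℂ) :
    (A * pauliChannel pI pX pY pZ B).trace = (pauliChannel pI pX pY pZ A * B).trace := by
  have trace_mul_conj (P : Matrix (Fin 2) (Fin 2) ℂ) :
      (A * (P * B * P)).trace = (P * A * P * B).trace := by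
    rw [← Matrix.mul_assoc, Matrix.trace_mul_comm]
    simp only [Matrix.mul_assoc]
  simp only [pauliChannel, Matrix.mul_add, Matrix.add_mul, Matrix.mul_smul, Matrix.smul_mul,
    Matrix.trace_add, Matrix.trace_smul, trace_mul_conj]

lemma pauliX_mul_proj0_mul_pauliX : pauliX * Proj0 * pauliX = 1 - Proj0 := by
  simp [pauliX, Proj0, Matrix.one_fin_two]

lemma pauliY_mul_proj0_mul_pauliY : pauliY * Proj0 * pauliY = 1 - Proj0 := by
  simp [pauliY, Proj0, Matrix.one_fin_two]

lemma pauliZ_mul_proj0_mul_pauliZ : pauliZ * Proj0 * pauliZ = Proj0 := by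
  simp only [pauliZ, Proj0, Matrix.mul_fin_two, mul_zero, zero_mul, mul_one, add_zero]

lemma pauliChannel_proj0 (pI pX pY pZ : ℝ) :
    pauliChannel pI pX pY pZ Proj0
      = ((pI + pZ : ℝ) : ℂ) • Proj0 + ((pX + pY : ℝ) : ℂ) • (1 - Proj0) := by
  rw [pauliChannel, pauliX_mul_proj0_mul_pauliX, pauliY_mul_proj0_mul_pauliY,
    pauliZ_mul_proj0_mul_pauliZ]
  push_cast
  module

lemma re_trace_proj0_mul_pauliChannel (pI pX pY pZ : ℝ) (ρ : Matrix (Fin 2) (Fin 2) ℂ) :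
    ((Proj0 * pauliChannel pI pX pY pZ ρ).trace).re
      = (pI + pZ) * ((Proj0 * ρ).trace).re
        + (pX + pY) * (ρ.trace.re - ((Proj0 * ρ).trace).re) := by
  rw [trace_mul_pauliChannel, pauliChannel_proj0]
  simp only [Matrix.add_mul, Matrix.smul_mul, Matrix.sub_mul, Matrix.one_mul, Matrix.trace_add,
    Matrix.trace_smul, Matrix.trace_sub, smul_eq_mul, Complex.add_re, Complex.re_ofReal_mul,
    Complex.sub_re]

section TraceOne

variable {ρ : Matrix (Fin 2) (Fin 2) ℂ} {pI pX pY pZ : ℝ}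

lemma re_trace_proj0_mul_pauliChannel_sub_half (htr : ρ.trace = 1)
    (hsum : pI + pX + pY + pZ = 1) :
    ((Proj0 * pauliChannel pI pX pY pZ ρ).trace).re - 1 / 2
      = (1 - 2 * (pX + pY)) * (((Proj0 * ρ).trace).re - 1 / 2) := by
  rw [re_trace_proj0_mul_pauliChannel, htr, Complex.one_re]
  linear_combination ((Proj0 * ρ).trace).re * hsum

lemma half_le_re_trace_proj0_mul_pauliChannel (htr : ρ.trace = 1)
    (hsum : pI + pX + pY + pZ = 1) (hq : pX + pY ≤ 1 / 2)
    (ht : 1 / 2 ≤ ((Proj0 * ρ).trace).re) :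
    1 / 2 ≤ ((Proj0 * pauliChannel pI pX pY pZ ρ).trace).re := by
  rw [← sub_nonneg, re_trace_proj0_mul_pauliChannel_sub_half htr hsum]
  exact mul_nonneg (by linarith) (sub_nonneg.mpr ht)

lemma re_trace_proj0_mul_pauliChannel_lt_half_iff (htr : ρ.trace = 1)
    (hsum : pI + pX + pY + pZ = 1) (hq : pX + pY < 1 / 2) :
    ((Proj0 * pauliChannel pI pX pY pZ ρ).trace).re < 1 / 2 ↔ ((Proj0 * ρ).trace).re < 1 / 2 := by
  have hfactor : 0 < 1 - 2 * (pX + pY) := by linarith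
  rw [← sub_neg, re_trace_proj0_mul_pauliChannel_sub_half htr hsum,
    ← smul_eq_mul, smul_neg_iff_of_pos_left hfactor, sub_neg]

lemma yhat_pauliChannel (htr : ρ.trace = 1) (hsum : pI + pX + pY + pZ = 1)
    (hq : pX + pY < 1 / 2) : yhat (pauliChannel pI pX pY pZ ρ) = yhat ρ := by
  simp only [yhat, ← not_lt, re_trace_proj0_mul_pauliChannel_lt_half_iff htr hsum hq]

end TraceOne

theorem pauliChannel_robust_general
    (ρ : Matrix (Fin 2) (Fin 2) ℂ) (htr : ρ.trace = 1)
    (pI pX pY pZ : ℝ) (hsum : pI + pX + pY + pZ = 1) :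
    (pX + pY ≤ 1 / 2 →
      (1 / 2 ≤ ((Proj0 * ρ).trace).re →
        1 / 2 ≤ ((Proj0 * pauliChannel pI pX pY pZ ρ).trace).re))
    ∧ (pX + pY < 1 / 2 →
      (((Proj0 * ρ).trace).re < 1 / 2 →
        ((Proj0 * pauliChannel pI pX pY pZ ρ).trace).re < 1 / 2))
    ∧ (pX + pY < 1 / 2 → yhat (pauliChannel pI pX pY pZ ρ) = yhat ρ) :=
  ⟨half_le_re_trace_proj0_mul_pauliChannel htr hsum,
    fun hq => (re_trace_proj0_mul_pauliChannel_lt_half_iff htr hsum hq).mpr,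
    yhat_pauliChannel htr hsum⟩

/-- For a single-qubit state `ρ` and the Pauli channel: if
`p_X + p_Y ≤ 1/2` then `Tr[Π₀ ρ] ≥ 1/2` implies `Tr[Π₀ E_p(ρ)] ≥ 1/2`; if
`p_X + p_Y < 1/2` then also `Tr[Π₀ ρ] < 1/2` implies `Tr[Π₀ E_p(ρ)] < 1/2`, and
hence the predicted label is unchanged: every state is a robust point. -/
theorem pauliChannel_robust
    (ρ : Matrix (Fin 2) (Fin 2) ℂ) (hρ : ρ.PosSemidef) (htr : ρ.trace = 1)
    (pI pX pY pZ : ℝ) (hI : 0 ≤ pI) (hX : 0 ≤ pX) (hY : 0 ≤ pY) (hZ : 0 ≤ pZ)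
    (hsum : pI + pX + pY + pZ = 1) :
    (pX + pY ≤ 1 / 2 →
      (1 / 2 ≤ ((Proj0 * ρ).trace).re →
        1 / 2 ≤ ((Proj0 * pauliChannel pI pX pY pZ ρ).trace).re))
    ∧ (pX + pY < 1 / 2 →
      (((Proj0 * ρ).trace).re < 1 / 2 →
        ((Proj0 * pauliChannel pI pX pY pZ ρ).trace).re < 1 / 2))
    ∧ (pX + pY < 1 / 2 → yhat (pauliChannel pI pX pY pZ ρ) = yhat ρ) :=
  pauliChannel_robust_general ρ htr pI pX pY pZ hsum
end

section
/- Let ρ be a single-qubit state and let 0 ≤ p < 1. Let E_AD be the amplitude damping channel E_AD(ρ) = [[ρ₀₀ + p ρ₁₁, √(1−p) ρ₀₁], [√(1−p) ρ₁₀, (1−p) ρ₁₁]]. Then Tr[Π₀ E_AD(ρ)] < 1/2 if and only if Tr[Π₁ ρ] > 1/(2(1−p)). Consequently, a state ρ with noiseless label ŷ(ρ) = 1 (i.e., Tr[Π₀ ρ] < 1/2) is a robust point of the amplitude damping channel if and only if Tr[Π₁ ρ] > 1/(2(1−p)). -/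
/-!
Amplitude damping preserves the trace and multiplies the weight of `Π₁` by `1 - p`, so on a
trace-one `ρ` it gives `Tr[Π₀ E_AD(ρ)] = 1 - (1 - p) Tr[Π₁ ρ]`, which is below `1/2` exactly when
`Tr[Π₁ ρ]` exceeds `1 / (2 (1 - p))`. Robustness of a state labelled `1` says that its image is
labelled `1` as well, which is this inequality.
-/

open Matrix Complex
open scoped ComplexOrder

noncomputable def Proj1 : Matrix (Fin 2) (Fin 2) ℂ := !![0, 0; 0, 1]

/-- The amplitude damping channel
`E_AD(ρ) = [[ρ₀₀ + p ρ₁₁, √(1−p) ρ₀₁], [√(1−p) ρ₁₀, (1−p) ρ₁₁]]`. -/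
noncomputable def ampDamp (p : ℝ) (ρ : Matrix (Fin 2) (Fin 2) ℂ) :
    Matrix (Fin 2) (Fin 2) ℂ :=
  !![ρ 0 0 + (p : ℂ) * ρ 1 1, ((Real.sqrt (1 - p) : ℝ) : ℂ) * ρ 0 1;
     ((Real.sqrt (1 - p) : ℝ) : ℂ) * ρ 1 0, ((1 - p : ℝ) : ℂ) * ρ 1 1]

theorem proj0_add_proj1 : Proj0 + Proj1 = 1 := by
  simp [Proj0, Proj1, Matrix.one_fin_two]

section

variable (p : ℝ) (ρ : Matrix (Fin 2) (Fin 2) ℂ)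

theorem trace_proj0_mul_add_trace_proj1_mul :
    (Proj0 * ρ).trace + (Proj1 * ρ).trace = ρ.trace := by
  rw [← trace_add, ← add_mul, proj0_add_proj1, one_mul]

theorem trace_proj1_mul : (Proj1 * ρ).trace = ρ 1 1 := by
  simp [Proj1, trace_fin_two, vecMul, dotProduct]

theorem trace_ampDamp : (ampDamp p ρ).trace = ρ.trace := by
  simp only [ampDamp, trace_fin_two_of, trace_fin_two ρ]
  push_cast
  ring

theorem trace_proj1_mul_ampDamp :
    (Proj1 * ampDamp p ρ).trace = ((1 - p : ℝ) : ℂ) * (Proj1 * ρ).trace := by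
  simp [trace_proj1_mul, ampDamp]

theorem trace_proj0_mul_ampDamp :
    (Proj0 * ampDamp p ρ).trace = ρ.trace - ((1 - p : ℝ) : ℂ) * (Proj1 * ρ).trace := by
  rw [← trace_proj1_mul_ampDamp, ← trace_ampDamp p ρ, eq_sub_iff_add_eq,
    trace_proj0_mul_add_trace_proj1_mul]

theorem yhat_eq_one_iff : yhat ρ = 1 ↔ ((Proj0 * ρ).trace).re < 1 / 2 := by
  simp [yhat]

variable {p ρ}

theorem re_trace_proj0_mul_ampDamp_lt_half_iff (htr : ρ.trace = 1) (hp1 : p < 1) :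
    ((Proj0 * ampDamp p ρ).trace).re < 1 / 2
      ↔ 1 / (2 * (1 - p)) < ((Proj1 * ρ).trace).re := by
  have hp : 0 < 1 - p := sub_pos.mpr hp1
  rw [trace_proj0_mul_ampDamp, htr, sub_re, one_re, re_ofReal_mul, ← div_div, div_lt_iff₀' hp]
  constructor <;> intro h <;> linarith

end

theorem ampDamp_label_one_robust_iff_general
    (ρ : Matrix (Fin 2) (Fin 2) ℂ) (htr : ρ.trace = 1) (p : ℝ) (hp1 : p < 1) :
    (((Proj0 * ampDamp p ρ).trace).re < 1 / 2
        ↔ 1 / (2 * (1 - p)) < ((Proj1 * ρ).trace).re)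
    ∧ (((Proj0 * ρ).trace).re < 1 / 2 →
        (yhat (ampDamp p ρ) = yhat ρ ↔ 1 / (2 * (1 - p)) < ((Proj1 * ρ).trace).re)) := by
  have hdamp := re_trace_proj0_mul_ampDamp_lt_half_iff htr hp1
  refine ⟨hdamp, fun hlabel => ?_⟩
  rw [(yhat_eq_one_iff ρ).mpr hlabel, yhat_eq_one_iff, hdamp]

/-- For a single-qubit state `ρ` and the amplitude damping channel
with `0 ≤ p < 1`: `Tr[Π₀ E_AD(ρ)] < 1/2` iff `Tr[Π₁ ρ] > 1/(2(1−p))`;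
consequently a state with noiseless label `ŷ(ρ) = 1` (i.e. `Tr[Π₀ ρ] < 1/2`) is
a robust point iff `Tr[Π₁ ρ] > 1/(2(1−p))`. -/
theorem ampDamp_label_one_robust_iff
    (ρ : Matrix (Fin 2) (Fin 2) ℂ) (hρ : ρ.PosSemidef) (htr : ρ.trace = 1)
    (p : ℝ) (hp0 : 0 ≤ p) (hp1 : p < 1) :
    (((Proj0 * ampDamp p ρ).trace).re < 1 / 2
        ↔ 1 / (2 * (1 - p)) < ((Proj1 * ρ).trace).re)
    ∧ (((Proj0 * ρ).trace).re < 1 / 2 →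
        (yhat (ampDamp p ρ) = yhat ρ ↔ 1 / (2 * (1 - p)) < ((Proj1 * ρ).trace).re)) :=
  ampDamp_label_one_robust_iff_general ρ htr p hp1
end

section
/- Let d ≥ 2 be even, let σ be a d×d density matrix, let P be a d×d Hermitian projector (P² = P) with Tr[P] = d/2, and let 0 < p̄ ≤ 1. Then Tr[P (p̄ σ + (1 − p̄) I/d)] = p̄ Tr[P σ] + (1 − p̄)/2; consequently Tr[P (p̄ σ + (1 − p̄) I/d)] ≥ 1/2 if and only if Tr[P σ] ≥ 1/2. In particular, with P = Π₀ ⊗ I_{2^{n−1}} and d = 2^n, the predicted label of an n-qubit classifier is unchanged by the composition of global depolarizing channels acting at any points in the circuit (whose final state has the form p̄ σ + (1 − p̄) I/d with p̄ the product of the individual depolarizing parameters), so every encoding is completely robust to global depolarizing noise. -/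
open Matrix Complex
open scoped ComplexOrder

/-!
The global depolarizing channel is the homothety of ratio `p` centred at the maximally mixed state
`I/d`, so the affine functional `ρ ↦ Tr[P ρ]` carries it to the homothety of ratio `p` centred at
`Tr[P]/d`. For `p > 0` a homothety of the real line preserves each side of its centre: a decision
threshold equal to `Tr[P]/d` is therefore insensitive to the noise.
-/

section GlobalDepolarizing

variable {K n : Type*} [Field K] [Fintype n] [DecidableEq n]

variable (K n) in
/-- The maximally mixed state `I/d`, the fixed point of the global depolarizing channels; it is `0`
when `d` vanishes in `K`. -/
def maximallyMixed : Matrix n n K :=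
  (Fintype.card n : K)⁻¹ • 1

/-- The global depolarizing channel with parameter `p`, the weight of the undisturbed state. It is
encoded as an affine map on all matrices: the term `I/d` is not multiplied by `Tr[ρ]`, which is `1`
on states. -/
def globalDepolarizing (p : K) (ρ : Matrix n n K) : Matrix n n K :=
  p • ρ + (1 - p) • maximallyMixed K n

theorem trace_mul_maximallyMixed (P : Matrix n n K) :
    (P * maximallyMixed K n).trace = P.trace / Fintype.card n := by
  rw [maximallyMixed, Matrix.mul_smul, mul_one, trace_smul, smul_eq_mul, inv_mul_eq_div]

theorem trace_mul_globalDepolarizing (P ρ : Matrix n n K) (p : K) :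
    (P * globalDepolarizing p ρ).trace =
      p * (P * ρ).trace + (1 - p) * (P.trace / Fintype.card n) := by
  simp only [globalDepolarizing, mul_add, Matrix.mul_smul, trace_add, trace_smul, smul_eq_mul,
    trace_mul_maximallyMixed]

end GlobalDepolarizing

theorem le_mul_add_one_sub_mul_iff {k : Type*} [Field k] [LinearOrder k] [IsStrictOrderedRing k]
    {p : k} (hp : 0 < p) (c x : k) : c ≤ p * x + (1 - p) * c ↔ c ≤ x := by
  rw [add_comm, ← AffineMap.lineMap_apply_ring, left_le_lineMap_iff_le hp]

theorem global_depolarizing_completely_robust_general {𝕜 n : Type*} [RCLike 𝕜] [Fintype n]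
    [DecidableEq n] [Nonempty n] {P : Matrix n n 𝕜} {c : ℝ}
    (hP : P.trace = (c : 𝕜) * Fintype.card n) (σ : Matrix n n 𝕜) {p : ℝ} (hp : 0 < p) :
    (P * globalDepolarizing (p : 𝕜) σ).trace = p * (P * σ).trace + (1 - p) * c ∧
      (c ≤ RCLike.re (P * globalDepolarizing (p : 𝕜) σ).trace ↔
        c ≤ RCLike.re (P * σ).trace) := by
  have trace_eq : (P * globalDepolarizing (p : 𝕜) σ).trace = p * (P * σ).trace + (1 - p) * c := by
    rw [trace_mul_globalDepolarizing, hP,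
      mul_div_cancel_right₀ _ (Nat.cast_ne_zero.mpr Fintype.card_ne_zero)]
  have re_trace_eq : RCLike.re (P * globalDepolarizing (p : 𝕜) σ).trace =
      p * RCLike.re (P * σ).trace + (1 - p) * c := by
    simp [trace_eq]
  exact ⟨trace_eq, re_trace_eq ▸ le_mul_add_one_sub_mul_iff hp c _⟩

/-- Let `σ` be a `d×d` density matrix (`d ≥ 2` even), `P` a
Hermitian projector with `Tr[P] = d/2`, and `0 < p̄ ≤ 1`. Then
`Tr[P (p̄ σ + (1 − p̄) I/d)] = p̄ Tr[P σ] + (1 − p̄)/2`, and consequently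
`Tr[P (p̄ σ + (1 − p̄) I/d)] ≥ 1/2 ↔ Tr[P σ] ≥ 1/2`: the predicted label of the
classifier is unchanged by a composition of global depolarizing channels, so
every encoding is completely robust to global depolarizing noise. -/
theorem global_depolarizing_completely_robust
    (d : ℕ) (hd : 2 ≤ d) (heven : Even d)
    (σ : Matrix (Fin d) (Fin d) ℂ) (hσ : σ.PosSemidef) (htr : σ.trace = 1)
    (P : Matrix (Fin d) (Fin d) ℂ) (hP : P.IsHermitian) (hproj : P * P = P)
    (hPtr : P.trace = (d : ℂ) / 2)
    (pbar : ℝ) (hp0 : 0 < pbar) (hp1 : pbar ≤ 1) :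
    ((P * ((pbar : ℂ) • σ
          + (((1 - pbar : ℝ) : ℂ) * (d : ℂ)⁻¹) • (1 : Matrix (Fin d) (Fin d) ℂ))).trace
        = (pbar : ℂ) * (P * σ).trace + ((1 - pbar : ℝ) : ℂ) / 2)
    ∧ (1 / 2 ≤ ((P * ((pbar : ℂ) • σ
          + (((1 - pbar : ℝ) : ℂ) * (d : ℂ)⁻¹) • (1 : Matrix (Fin d) (Fin d) ℂ))).trace).re
        ↔ 1 / 2 ≤ ((P * σ).trace).re) := by
  have : NeZero d := ⟨by lia⟩
  have hPtr_half : P.trace = ((1 / 2 : ℝ) : ℂ) * Fintype.card (Fin d) := by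
    simp [hPtr, div_eq_inv_mul]
  simpa [globalDepolarizing, maximallyMixed, smul_smul, div_eq_mul_inv] using
    global_depolarizing_completely_robust_general (c := 1 / 2) hPtr_half σ hp0
end

section
/- Let ρ be a single-qubit state and let p₀₀, p₀₁ be nonnegative reals with p₀₀ + p₀₁ = 1 and p₀₀ > p₀₁. Define the noisy measurement operator Π̃₀ = p₀₀ Π₀ + p₀₁ Π₁. Then Tr[Π̃₀ ρ] = (p₀₀ − p₀₁) Tr[Π₀ ρ] + p₀₁, and consequently Tr[Π̃₀ ρ] ≥ 1/2 if and only if Tr[Π₀ ρ] ≥ 1/2. Hence the classifier's predicted label is unchanged by measurement noise with assignment probabilities satisfying p₀₀ > p₀₁, i.e., every encoding is completely robust to such measurement noise. -/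
open Matrix Complex
open scoped ComplexOrder

theorem trace_smul_add_smul_mul_of_add_eq_one {n R : Type*} [Fintype n] [DecidableEq n]
    [CommRing R] {E F ρ : Matrix n n R} (hEF : E + F = 1) (hρ : ρ.trace = 1) (p q : R) :
    ((p • E + q • F) * ρ).trace = (p - q) * (E * ρ).trace + q := by
  have effect_eq : p • E + q • F = (p - q) • E + q • (1 : Matrix n n R) := by
    rw [← hEF]
    module
  rw [effect_eq, add_mul, smul_mul_assoc, smul_mul_assoc, one_mul, trace_add, trace_smul,
    trace_smul, hρ, smul_eq_mul, smul_eq_mul, mul_one]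

theorem half_le_sub_mul_add_iff {K : Type*} [Field K] [LinearOrder K] [IsStrictOrderedRing K]
    {p q : K} (hsum : p + q = 1) (hlt : q < p) (t : K) :
    1 / 2 ≤ (p - q) * t + q ↔ 1 / 2 ≤ t := by
  -- The affine map `t ↦ (p - q) t + q` fixes `1 / 2`, so it scales distances to `1 / 2`.
  have sub_half_eq : (p - q) * t + q - 1 / 2 = (p - q) * (t - 1 / 2) := by
    linear_combination (1 / 2) * hsum
  rw [← sub_nonneg, sub_half_eq, mul_nonneg_iff_of_pos_left (sub_pos.2 hlt), sub_nonneg]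

theorem measurement_noise_robust_general {n : Type*} [Fintype n] [DecidableEq n]
    {E F ρ : Matrix n n ℂ} (hEF : E + F = 1) (htr : ρ.trace = 1)
    {p q : ℝ} (hsum : p + q = 1) (hlt : q < p) :
    (((p : ℂ) • E + (q : ℂ) • F) * ρ).trace = ((p - q : ℝ) : ℂ) * (E * ρ).trace + (q : ℂ)
    ∧ (1 / 2 ≤ (((p : ℂ) • E + (q : ℂ) • F) * ρ).trace.re ↔ 1 / 2 ≤ (E * ρ).trace.re) := by
  have noisy_trace : (((p : ℂ) • E + (q : ℂ) • F) * ρ).trace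
      = ((p - q : ℝ) : ℂ) * (E * ρ).trace + (q : ℂ) := by
    rw [ofReal_sub]
    exact trace_smul_add_smul_mul_of_add_eq_one hEF htr p q
  refine ⟨noisy_trace, ?_⟩
  rw [noisy_trace, add_re, re_ofReal_mul, ofReal_re]
  exact half_le_sub_mul_add_iff hsum hlt _

/-- For a single-qubit state `ρ` and measurement noise with
assignment probabilities `p₀₀ + p₀₁ = 1`, `p₀₀ > p₀₁ ≥ 0`, the noisy POVM
element `Π̃₀ = p₀₀ Π₀ + p₀₁ Π₁` satisfies
`Tr[Π̃₀ ρ] = (p₀₀ − p₀₁) Tr[Π₀ ρ] + p₀₁`, and consequently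
`Tr[Π̃₀ ρ] ≥ 1/2 ↔ Tr[Π₀ ρ] ≥ 1/2`: the predicted label is unchanged by such
measurement noise, i.e. every encoding is completely robust to it. -/
theorem measurement_noise_robust
    (ρ : Matrix (Fin 2) (Fin 2) ℂ) (hρ : ρ.PosSemidef) (htr : ρ.trace = 1)
    (p00 p01 : ℝ) (h00 : 0 ≤ p00) (h01 : 0 ≤ p01)
    (hsum : p00 + p01 = 1) (hgt : p01 < p00) :
    ((((p00 : ℂ) • Proj0 + (p01 : ℂ) • Proj1) * ρ).trace
        = ((p00 - p01 : ℝ) : ℂ) * (Proj0 * ρ).trace + ((p01 : ℝ) : ℂ))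
    ∧ (1 / 2 ≤ ((((p00 : ℂ) • Proj0 + (p01 : ℂ) • Proj1) * ρ).trace).re
        ↔ 1 / 2 ≤ ((Proj0 * ρ).trace).re) :=
  measurement_noise_robust_general proj0_add_proj1 htr hsum hgt
end

section
/- Let Φ be a positive, trace-preserving linear map on 2×2 complex matrices (a trace-preserving quantum channel on one qubit). Then there exists a single-qubit density matrix σ such that ŷ(Φ(σ)) = ŷ(σ), i.e., Tr[Π₀ Φ(σ)] ≥ 1/2 ⇔ Tr[Π₀ σ] ≥ 1/2. Hence for any data point x ∈ X there exists an encoding E with E(x) = σ satisfying ŷ(Φ(E(x))) = ŷ(E(x)): robust encodings exist for every trace-preserving channel. Moreover, every density-matrix fixed point of Φ is such a robust point, i.e., F(Φ) ⊆ R(Φ, E, ŷ). -/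
/-!
A fixed state of `Φ` keeps its label under every decision rule, so it suffices to find one. The
density matrices form a nonempty compact convex set which `Φ` maps into itself, and `Φ` moves the
average of the first `m` points of an orbit in this set by `1/m` times the difference of two states,
which tends to zero. Every cluster point of these averages is therefore fixed.
-/

open Matrix Complex
open scoped ComplexOrder

open Filter Function Set
open scoped Topology

section FixedPoint

variable {R E F : Type*} [AddCommGroup E] [AddCommGroup F]

lemma affineMap_birkhoffAverage {α : Type*} [DivisionRing R] [Module R E] [Module R F]
    (φ : E →ᵃ[R] F) (f : α → α) (g : α → E) {n : ℕ} (hn : (n : R) ≠ 0) (x : α) :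
    φ (birkhoffAverage R f g n x) = birkhoffAverage R f (φ ∘ g) n x := by
  have hφ : φ ∘ g = φ.linear ∘ g + fun _ => φ 0 := by
    ext y
    exact congrFun φ.decomp (g y)
  have hconst : birkhoffAverage R f (fun _ => φ 0) n = fun _ => φ 0 :=
    birkhoffAverage_of_comp_eq R rfl hn
  rw [hφ, birkhoffAverage_add, Pi.add_apply, Pi.add_apply, hconst,
    ← map_birkhoffAverage R R φ.linear]
  exact congrFun φ.decomp _

lemma affineMap_birkhoffAverage_id_sub [DivisionRing R] [Module R E] (φ : E →ᵃ[R] E) {n : ℕ}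
    (hn : (n : R) ≠ 0) (x : E) :
    φ (birkhoffAverage R φ id n x) - birkhoffAverage R φ id n x =
      (n : R)⁻¹ • (φ^[n] x - x) := by
  have hshift : birkhoffAverage R φ (φ ∘ id) n x = birkhoffAverage R φ id n (φ x) := by
    simp only [birkhoffAverage, birkhoffSum, Function.comp_apply, id, ← iterate_succ_apply,
      ← iterate_succ_apply']
  rw [affineMap_birkhoffAverage φ φ id hn, hshift, birkhoffAverage_apply_sub_birkhoffAverage,
    id, id]

lemma birkhoffAverage_mem_of_convex {α : Type*} [Field R] [LinearOrder R] [IsStrictOrderedRing R]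
    [Module R E] {K : Set E} (hK : Convex R K) {f : α → α} {g : α → E} {x : α}
    (hx : ∀ k, g (f^[k] x) ∈ K) {n : ℕ} (hn : n ≠ 0) : birkhoffAverage R f g n x ∈ K := by
  rw [birkhoffAverage, birkhoffSum, Finset.smul_sum]
  exact hK.sum_mem (fun _ _ => by positivity) (by simp [hn]) fun k _ => hx k

variable [Module ℝ E] [TopologicalSpace E] [IsTopologicalAddGroup E]

lemma tendsto_affineMap_birkhoffAverage_id_sub {K : Set E} (hK : Bornology.IsVonNBounded ℝ K)
    {φ : E →ᵃ[ℝ] E} (hφK : MapsTo φ K K) {x : E} (hx : x ∈ K) :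
    Tendsto (fun n : ℕ => φ (birkhoffAverage ℝ φ id n x) - birkhoffAverage ℝ φ id n x)
      atTop (𝓝 0) := by
  have hsmall : Tendsto (fun n : ℕ => (n : ℝ)⁻¹ • (φ^[n] x - x)) atTop (𝓝 0) :=
    (hK.sub hK).smul_tendsto_zero
      (.of_forall fun n => sub_mem_sub (hφK.iterate n hx) hx) tendsto_inv_atTop_nhds_zero_nat
  refine hsmall.congr' ?_
  filter_upwards [eventually_ne_atTop 0] with n hn
  exact (affineMap_birkhoffAverage_id_sub φ (Nat.cast_ne_zero.mpr hn) x).symm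

/-- The case of a single map of the Markov–Kakutani fixed point theorem. -/
theorem exists_isFixedPt_affineMap_of_isCompact_of_convex [ContinuousSMul ℝ E] [T2Space E]
    {K : Set E} (hKcomp : IsCompact K) (hKconv : Convex ℝ K) (hKne : K.Nonempty)
    {φ : E →ᵃ[ℝ] E} (hφ : ContinuousOn φ K) (hφK : MapsTo φ K K) : ∃ x ∈ K, IsFixedPt φ x := by
  obtain ⟨x₀, hx₀⟩ := hKne
  let avg : ℕ → E := fun n => birkhoffAverage ℝ φ id n x₀
  have havg : ∀ᶠ n in atTop, avg n ∈ K := by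
    filter_upwards [eventually_ne_atTop 0] with n hn
    exact birkhoffAverage_mem_of_convex hKconv (fun k => hφK.iterate k hx₀) hn
  obtain ⟨x, hxK, hcluster⟩ := hKcomp.exists_mapClusterPt_of_frequently havg.frequently
  obtain ⟨U, hU, hlim⟩ := mapClusterPt_iff_ultrafilter.mp hcluster
  have hφlim : Tendsto (φ ∘ avg) U (𝓝 (φ x)) :=
    (hφ x hxK).tendsto.comp (tendsto_nhdsWithin_iff.mpr ⟨hlim, hU havg⟩)
  have hdiff : Tendsto (fun n => φ (avg n) - avg n) U (𝓝 0) :=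
    (tendsto_affineMap_birkhoffAverage_id_sub (hKcomp.isVonNBounded ℝ) hφK hx₀).mono_left hU
  exact ⟨x, hxK, sub_eq_zero.mp (tendsto_nhds_unique (hφlim.sub hlim) hdiff)⟩

end FixedPoint

section DensityMatrices

variable {n 𝕜 : Type*} [RCLike 𝕜]

lemma norm_apply_sq_le_of_posSemidef {A : Matrix n n 𝕜} (hA : A.PosSemidef) (i j : n) :
    ‖A i j‖ ^ 2 ≤ RCLike.re (A i i) * RCLike.re (A j j) := by
  have hminor : 0 ≤ A i i * A j j - A i j * A j i := by
    simpa only [det_fin_two] using! (hA.submatrix ![i, j]).det_nonneg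
  have hoff : A i j * A j i = ((‖A i j‖ ^ 2 : ℝ) : 𝕜) := by
    rw [← hA.isHermitian.apply j i, RCLike.star_def, RCLike.mul_conj, RCLike.ofReal_pow]
  have hdiag : RCLike.im (A i i) = 0 := (RCLike.nonneg_iff.mp hA.diag_nonneg).2
  have hre := (RCLike.nonneg_iff.mp hminor).1
  rw [hoff, map_sub, RCLike.mul_re, hdiag, zero_mul, sub_zero, RCLike.ofReal_re] at hre
  exact sub_nonneg.mp hre

lemma isClosed_setOfPred_posSemidef : IsClosed {A : Matrix n n 𝕜 | A.PosSemidef} := by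
  simp only [PosSemidef, IsHermitian, Finsupp.sum, ofPred_and, ofPred_forall]
  exact (isClosed_eq (by fun_prop) continuous_id).inter
    (isClosed_iInter fun x => isClosed_le continuous_const (by fun_prop))

variable [Fintype n]

lemma re_apply_le_re_trace_of_posSemidef {A : Matrix n n 𝕜} (hA : A.PosSemidef) (i : n) :
    RCLike.re (A i i) ≤ RCLike.re A.trace := by
  rw [trace, map_sum]
  exact Finset.single_le_sum (f := fun j => RCLike.re (A j j))
    (fun _ _ => (RCLike.nonneg_iff.mp hA.diag_nonneg).1) (Finset.mem_univ i)

lemma norm_apply_le_re_trace_of_posSemidef {A : Matrix n n 𝕜} (hA : A.PosSemidef) (i j : n) :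
    ‖A i j‖ ≤ RCLike.re A.trace := by
  have hnonneg (k : n) : 0 ≤ RCLike.re (A k k) := (RCLike.nonneg_iff.mp hA.diag_nonneg).1
  have hle := re_apply_le_re_trace_of_posSemidef hA
  refine le_of_sq_le_sq ?_ ((hnonneg i).trans (hle i))
  calc ‖A i j‖ ^ 2 ≤ RCLike.re (A i i) * RCLike.re (A j j) := norm_apply_sq_le_of_posSemidef hA i j
    _ ≤ RCLike.re A.trace ^ 2 := by
      rw [sq]
      exact mul_le_mul (hle i) (hle j) (hnonneg j) ((hnonneg i).trans (hle i))

variable (n 𝕜) in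
/-- The density matrices over `𝕜`: the states of a quantum system with basis states indexed
by `n`. -/
def densityMatrices : Set (Matrix n n 𝕜) :=
  {ρ | ρ.PosSemidef ∧ ρ.trace = 1}

lemma convex_densityMatrices : Convex ℝ (densityMatrices n 𝕜) := by
  rintro ρ ⟨hρ, hρtr⟩ σ ⟨hσ, hσtr⟩ a b ha hb hab
  refine ⟨(hρ.smul ha).add (hσ.smul hb), ?_⟩
  rw [trace_add, trace_smul, trace_smul, hρtr, hσtr, ← add_smul, hab, one_smul]

lemma isCompact_densityMatrices : IsCompact (densityMatrices n 𝕜) := by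
  refine (isCompact_closedBall (0 : 𝕜) 1).matrix.of_isClosed_subset
    (isClosed_setOfPred_posSemidef.inter
      (isClosed_eq continuous_id.matrix_trace continuous_const)) ?_
  rintro ρ ⟨hρ, hρtr⟩ i j
  simpa [hρtr] using norm_apply_le_re_trace_of_posSemidef hρ i j

lemma nonempty_densityMatrices [Nonempty n] : (densityMatrices n 𝕜).Nonempty := by
  classical
  obtain ⟨i⟩ := ‹Nonempty n›
  exact ⟨diagonal (Pi.single i 1), .diagonal (Pi.single_nonneg.mpr zero_le_one), by simp⟩

theorem exists_isFixedPt_mem_densityMatrices [Nonempty n] {Φ : Matrix n n 𝕜 →ᵃ[ℝ] Matrix n n 𝕜}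
    (hΦ : MapsTo Φ (densityMatrices n 𝕜) (densityMatrices n 𝕜)) :
    ∃ σ ∈ densityMatrices n 𝕜, IsFixedPt Φ σ := by
  have hlin : Continuous Φ.linear := Φ.linear.continuous_of_finiteDimensional
  have hΦcont : Continuous Φ := AffineMap.continuous_linear_iff.mp hlin
  exact exists_isFixedPt_affineMap_of_isCompact_of_convex (E := Matrix n n 𝕜)
    isCompact_densityMatrices convex_densityMatrices nonempty_densityMatrices
    hΦcont.continuousOn hΦ

end DensityMatrices

theorem robust_encoding_exists_general {n 𝕜 Y : Type*} [Fintype n] [Nonempty n] [RCLike 𝕜]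
    (Φ : Matrix n n 𝕜 →ᵃ[ℝ] Matrix n n 𝕜)
    (hΦ : MapsTo Φ (densityMatrices n 𝕜) (densityMatrices n 𝕜)) (label : Matrix n n 𝕜 → Y) :
    (∃ σ : Matrix n n 𝕜, σ.PosSemidef ∧ σ.trace = 1 ∧ label (Φ σ) = label σ)
    ∧ (∀ (X : Type*) (x : X), ∃ E : X → Matrix n n 𝕜,
        (E x).PosSemidef ∧ (E x).trace = 1 ∧ label (Φ (E x)) = label (E x))
    ∧ (∀ σ : Matrix n n 𝕜,
        σ.PosSemidef → σ.trace = 1 → Φ σ = σ → label (Φ σ) = label σ) := by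
  obtain ⟨σ, ⟨hσ, hσtr⟩, hfix⟩ := exists_isFixedPt_mem_densityMatrices hΦ
  have hrobust : label (Φ σ) = label σ := congrArg label hfix
  exact ⟨⟨σ, hσ, hσtr, hrobust⟩, fun _ _ => ⟨fun _ => σ, hσ, hσtr, hrobust⟩,
    fun _ _ _ h => congrArg label h⟩

/-- Let `Φ` be a positive, trace-preserving linear map on 2×2
complex matrices. Then there exists a single-qubit density matrix `σ` with
`ŷ(Φ(σ)) = ŷ(σ)`; hence for any data point `x ∈ X` there is an encoding `E`
with `E(x) = σ` satisfying `ŷ(Φ(E(x))) = ŷ(E(x))`: robust encodings exist for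
every trace-preserving channel. Moreover, every density-matrix fixed point of
`Φ` is such a robust point, i.e. `F(Φ) ⊆ R(Φ, E, ŷ)`. -/
theorem robust_encoding_exists
    (Φ : Matrix (Fin 2) (Fin 2) ℂ →ₗ[ℂ] Matrix (Fin 2) (Fin 2) ℂ)
    (hpos : ∀ A : Matrix (Fin 2) (Fin 2) ℂ, A.PosSemidef → (Φ A).PosSemidef)
    (htp : ∀ A : Matrix (Fin 2) (Fin 2) ℂ, (Φ A).trace = A.trace) :
    (∃ σ : Matrix (Fin 2) (Fin 2) ℂ,
        σ.PosSemidef ∧ σ.trace = 1 ∧ yhat (Φ σ) = yhat σ)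
    ∧ (∀ (X : Type) (x : X), ∃ E : X → Matrix (Fin 2) (Fin 2) ℂ,
        (E x).PosSemidef ∧ (E x).trace = 1 ∧ yhat (Φ (E x)) = yhat (E x))
    ∧ (∀ σ : Matrix (Fin 2) (Fin 2) ℂ,
        σ.PosSemidef → σ.trace = 1 → Φ σ = σ → yhat (Φ σ) = yhat σ) := by
  exact robust_encoding_exists_general (Φ.restrictScalars ℝ).toAffineMap
    (fun A hA => ⟨hpos A hA.1, (htp A).trans hA.2⟩) yhat
end
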